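/- arXiv:2404.13763 — 2 statements merged into one kernel-verified Lean document; each statement's English description precedes it below -/
import Mathlib

section
/- For all integers b ≥ 2 and k ≥ 1, the exact convergent-series identity I(b,0,k) = b·log b + ∑_{m=1}^∞ (−1)^{m−1} ζ(m+1)·(u_{k;m}(b,0) − u_{k−1;m}(b,0))/b^{m+1} holds, where the series on the right converges absolutely. -/
open Filter Asymptotics

/-- The Irwin harmonic sum `I(b,d,k)`: sum of `1/m` over positive integers `m`
whose base-`b` digit list contains the digit `d` exactly `k` times. -/
noncomputable def irwinSum (b d k : ℕ) : ℝ :=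
  ∑' m : ℕ, if 0 < m ∧ (Nat.digits b m).count d = k then (1 : ℝ) / m else 0

/-- `ζ(s) = ∑_{n ≥ 1} n^{-s}` for an integer exponent. -/
noncomputable def zetaR (s : ℕ) : ℝ := ∑' n : ℕ, 1 / ((n : ℝ) + 1) ^ s

/-- The `m`-th moment of the Irwin measure. -/
noncomputable def momentU (b d k m : ℕ) : ℝ :=
  ∑' l : ℕ, ((b : ℝ) ^ (l * (m + 1)))⁻¹ *
    ∑ n ∈ Finset.range (b ^ l),
      (if ((Finset.range l).filter fun i => n / b ^ i % b = d).card = k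
        then (n : ℝ) ^ m else 0)

namespace Irw

def cnt (b l n : ℕ) : ℕ := ((Finset.range l).filter fun i => n / b ^ i % b = 0).card

lemma cnt_eq (b l n : ℕ) : cnt b l n = ∑ i ∈ Finset.range l, if n / b ^ i % b = 0 then 1 else 0 := by
  rw [cnt, Finset.card_filter]

lemma cnt_top (b l a r : ℕ) (hb : 2 ≤ b) (ha : a < b) (hr : r < b ^ l) :
    cnt b (l + 1) (a * b ^ l + r) = cnt b l r + if a = 0 then 1 else 0 := by
  rw [cnt_eq, cnt_eq, Finset.sum_range_succ]
  congr 1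
  · apply Finset.sum_congr rfl
    intro i hi
    have hi : i < l := Finset.mem_range.1 hi
    obtain ⟨t, rfl⟩ := Nat.exists_eq_add_of_lt hi
    have : (a * b ^ (i + t + 1) + r) / b ^ i % b = r / b ^ i % b := by
      have e : a * b ^ (i + t + 1) + r = r + b ^ i * (b * (a * b ^ t)) := by ring
      rw [e, Nat.add_mul_div_left _ _ (by positivity), Nat.add_mul_mod_self_left]
    rw [this]
  · have : (a * b ^ l + r) / b ^ l = a := by
      rw [add_comm, Nat.add_mul_div_right _ _ (by positivity), Nat.div_eq_of_lt hr, zero_add]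
    rw [this, Nat.mod_eq_of_lt ha]

lemma cnt_bot (b l n : ℕ) :
    cnt b (l + 1) n = cnt b l (n / b) + if n % b = 0 then 1 else 0 := by
  rw [cnt_eq, cnt_eq, Finset.sum_range_succ']
  simp [pow_succ', Nat.div_div_eq_div_mul]

lemma digits_count (b : ℕ) (hb : 2 ≤ b) (l : ℕ) : ∀ m, b ^ l ≤ m → m < b ^ (l + 1) →
    (Nat.digits b m).count 0 = cnt b (l + 1) m := by
  induction l with
  | zero =>
    intro m h1 h2
    have hm : 0 < m := by rw [pow_zero] at h1; omega
    have h2 : m < b := by simpa using h2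
    rw [Nat.digits_of_lt b m hm.ne' h2, cnt_eq, Finset.sum_range_one, pow_zero, Nat.div_one, Nat.mod_eq_of_lt h2]
    simp [hm.ne']
  | succ l ih =>
    intro m h1 h2
    have hm : 0 < m := lt_of_lt_of_le (by positivity) h1
    rw [Nat.digits_def' (by omega) hm, List.count_cons, cnt_bot, ih]
    · simp
    · rw [Nat.le_div_iff_mul_le (by omega)]; rwa [← pow_succ]
    · rw [Nat.div_lt_iff_lt_mul (by omega)]; rwa [← pow_succ]

lemma sum_range_mul' {M : Type*} [AddCommMonoid M] (b m : ℕ) (f : ℕ → M) :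
    ∑ n ∈ Finset.range (b * m), f n = ∑ a ∈ Finset.range b, ∑ r ∈ Finset.range m, f (a * m + r) := by
  induction b with
  | zero => simp
  | succ b ih => rw [add_mul, one_mul, Finset.sum_range_add, ih, Finset.sum_range_succ]

lemma sum_range_pow_succ {M : Type*} [AddCommMonoid M] (b l : ℕ) (hb : 2 ≤ b) (f : ℕ → M) :
    ∑ n ∈ Finset.range (b ^ (l+1)), f n = ∑ r ∈ Finset.range (b ^ l), f r +
      ∑ a ∈ Finset.Ico 1 b, ∑ r ∈ Finset.range (b ^ l), f (a * b ^ l + r) := by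
  rw [pow_succ', sum_range_mul', Finset.range_eq_Ico, Finset.sum_eq_sum_Ico_succ_bot (by omega)]
  simp

noncomputable def S (b k l : ℕ) (f : ℝ → ℝ) : ℝ :=
  ((b : ℝ) ^ l)⁻¹ * ∑ n ∈ Finset.range (b ^ l), if cnt b l n = k then f (n / (b : ℝ) ^ l) else 0

lemma S_zero_succ (b k : ℕ) (f : ℝ → ℝ) : S b (k + 1) 0 f = 0 := by simp [S, cnt]

lemma S_zero_zero (b : ℕ) (f : ℝ → ℝ) : S b 0 0 f = f 0 := by simp [S, cnt]

lemma S_aux (b k l a : ℕ) (hb : 2 ≤ b) (ha : a < b) (h0 : a ≠ 0) (f : ℝ → ℝ) :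
    ((b : ℝ) ^ (l+1))⁻¹ * ∑ r ∈ Finset.range (b ^ l),
      (if cnt b (l + 1) (a * b ^ l + r) = k then f ((a * b ^ l + r : ℕ) / (b : ℝ) ^ (l+1)) else 0)
    = (b : ℝ)⁻¹ * S b k l (fun x => f ((a + x) / b)) := by
  have hb0 : (b : ℝ) ≠ 0 := by positivity
  rw [S, ← mul_assoc, ← mul_inv, ← pow_succ']
  congr 1
  apply Finset.sum_congr rfl
  intro r hr
  rw [cnt_top b l a r hb ha (Finset.mem_range.1 hr), if_neg h0, add_zero]
  congr 2
  push_cast; field_simp; ring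

lemma S_succ (b k l : ℕ) (hb : 2 ≤ b) (f : ℝ → ℝ) :
    S b (k + 1) (l + 1) f = (b : ℝ)⁻¹ * (S b k l (fun x => f (x / b)) +
      ∑ a ∈ Finset.Ico 1 b, S b (k + 1) l (fun x => f ((a + x) / b))) := by
  have hb0 : (b : ℝ) ≠ 0 := by positivity
  rw [S, sum_range_pow_succ b l hb, mul_add, mul_add, Finset.mul_sum (Finset.Ico 1 b), Finset.mul_sum (Finset.Ico 1 b)]
  congr 1
  · rw [S, ← mul_assoc, ← mul_inv, ← pow_succ']
    congr 1
    apply Finset.sum_congr rfl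
    intro r hr
    have := cnt_top b l 0 r hb (by omega) (Finset.mem_range.1 hr)
    simp only [zero_mul, zero_add, if_true] at this
    rw [this]
    simp only [add_left_inj]
    congr 2
    field_simp; ring
  · apply Finset.sum_congr rfl
    intro a ha
    rw [Finset.mem_Ico] at ha
    exact S_aux b (k+1) l a hb (by omega) (by omega) f

lemma S_succ_zero (b l : ℕ) (hb : 2 ≤ b) (f : ℝ → ℝ) :
    S b 0 (l + 1) f = (b : ℝ)⁻¹ * (
      ∑ a ∈ Finset.Ico 1 b, S b 0 l (fun x => f ((a + x) / b))) := by
  rw [S, sum_range_pow_succ b l hb, mul_add, Finset.mul_sum (Finset.Ico 1 b), Finset.mul_sum (Finset.Ico 1 b)]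
  rw [Finset.sum_eq_zero, mul_zero, zero_add]
  · apply Finset.sum_congr rfl
    intro a ha
    rw [Finset.mem_Ico] at ha
    exact S_aux b 0 l a hb (by omega) (by omega) f
  · intro r hr
    have := cnt_top b l 0 r hb (by omega) (Finset.mem_range.1 hr)
    simp only [zero_mul, zero_add, if_true] at this
    rw [this]; simp

lemma S_sub (b k l : ℕ) (f g : ℝ → ℝ) : S b k l (fun x => f x - g x) = S b k l f - S b k l g := by
  rw [S, S, S, ← mul_sub, ← Finset.sum_sub_distrib]
  congr 1; apply Finset.sum_congr rfl; intros; split_ifs <;> simp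

lemma S_mul (b k l : ℕ) (c : ℝ) (f : ℝ → ℝ) : S b k l (fun x => c * f x) = c * S b k l f := by
  rw [S, S, mul_left_comm, Finset.mul_sum _ _ c]
  congr 1; apply Finset.sum_congr rfl; intros; split_ifs <;> simp

lemma S_mono (b k l : ℕ) (hb : 2 ≤ b) (f g : ℝ → ℝ) (h : ∀ x, 0 ≤ x → x ≤ 1 → f x ≤ g x) :
    S b k l f ≤ S b k l g := by
  apply mul_le_mul_of_nonneg_left _ (by positivity)
  apply Finset.sum_le_sum
  intro n hn
  split_ifs
  · apply h
    · positivity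
    · have : n < b ^ l := Finset.mem_range.1 hn
      rw [div_le_one (by positivity)]
      exact_mod_cast this.le
  · rfl

lemma S_congr (b k l : ℕ) (hb : 2 ≤ b) (f g : ℝ → ℝ) (h : ∀ x, 0 ≤ x → x ≤ 1 → f x = g x) :
    S b k l f = S b k l g :=
  le_antisymm (S_mono b k l hb f g fun x h0 h1 => (h x h0 h1).le)
    (S_mono b k l hb g f fun x h0 h1 => (h x h0 h1).ge)

lemma S_one_nonneg (b k l : ℕ) : 0 ≤ S b k l (fun _ => 1) := by
  apply mul_nonneg (by positivity)
  apply Finset.sum_nonneg; intros; split_ifs <;> simp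

lemma S_abs (b k l : ℕ) (hb : 2 ≤ b) (f : ℝ → ℝ) (C : ℝ) (h : ∀ x, 0 ≤ x → x ≤ 1 → |f x| ≤ C) :
    |S b k l f| ≤ C * S b k l (fun _ => 1) := by
  rw [← S_mul, abs_le]
  constructor
  · have := S_mono b k l hb (fun x => (-1) * (C * 1)) f (fun x h0 h1 => by
      have := (abs_le.1 (h x h0 h1)).1; linarith)
    rw [S_mul] at this; linarith
  · exact S_mono b k l hb _ _ (fun x h0 h1 => by
      have := (abs_le.1 (h x h0 h1)).2; linarith)

lemma mass (b k : ℕ) (hb : 2 ≤ b) : HasSum (fun l => S b k l (fun _ => 1)) b := by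
  have hb0 : (b : ℝ) ≠ 0 := by positivity
  have hbp : (0 : ℝ) < b := by positivity
  have hcast : ((b - 1 : ℕ) : ℝ) = b - 1 := by push_cast [show 1 ≤ b by omega]; ring
  induction k with
  | zero =>
    have h : ∀ l, S b 0 l (fun _ => 1) = (((b : ℝ) - 1) / b) ^ l := by
      intro l
      induction l with
      | zero => simp [S_zero_zero]
      | succ l ih =>
        rw [S_succ_zero b l hb]
        simp only [Finset.sum_const, Nat.card_Ico, ih, nsmul_eq_mul, hcast]
        rw [pow_succ]; field_simp
    simp_rw [h]
    have h1 : (1 : ℝ) ≤ b := by exact_mod_cast (by omega : 1 ≤ b)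
    have := hasSum_geometric_of_lt_one (r := ((b : ℝ) - 1) / b) (div_nonneg (by linarith) hbp.le)
      (by rw [div_lt_one hbp]; linarith)
    convert this using 1
    field_simp; simp
  | succ k ih =>
    have hrec : ∀ l, S b (k+1) (l+1) (fun _ => 1) =
        (b : ℝ)⁻¹ * (S b k l (fun _ => 1) + (b - 1) * S b (k+1) l (fun _ => 1)) := by
      intro l
      rw [S_succ b k l hb]
      simp only [Finset.sum_const, Nat.card_Ico, nsmul_eq_mul, hcast]
    have hs : Summable (fun l => S b (k+1) l (fun _ => 1)) := by
      apply summable_of_sum_range_le (c := b) (fun l => S_one_nonneg _ _ _)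
      intro n
      have h1 : ∑ l ∈ Finset.range (n+1), S b (k+1) l (fun _ => 1) =
        (b : ℝ)⁻¹ * (∑ l ∈ Finset.range n, S b k l (fun _ => 1) +
          (b - 1) * ∑ l ∈ Finset.range n, S b (k+1) l (fun _ => 1)) := by
        rw [Finset.sum_range_succ', S_zero_succ, add_zero]
        simp_rw [hrec]
        rw [← Finset.mul_sum, Finset.sum_add_distrib, ← Finset.mul_sum]
      have h2 : ∑ l ∈ Finset.range n, S b k l (fun _ => 1) ≤ b := by
        rw [← ih.tsum_eq]
        exact ih.summable.sum_le_tsum _ (fun l _ => S_one_nonneg _ _ _)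
      have h3 := S_one_nonneg b (k+1) n
      rw [eq_inv_mul_iff_mul_eq₀ hb0, Finset.sum_range_succ] at h1
      nlinarith
    have h := hs.hasSum
    have h4 : ∑' l, S b (k+1) l (fun _ => 1) = (b : ℝ)⁻¹ * (b + (b-1) * ∑' l, S b (k+1) l (fun _ => 1)) := by
      conv_lhs => rw [hs.tsum_eq_zero_add, S_zero_succ, zero_add]
      simp_rw [hrec]
      exact ((ih.add (h.mul_left _)).mul_left _).tsum_eq
    have h5 : ∑' l, S b (k+1) l (fun _ => 1) = b := by
      rw [eq_inv_mul_iff_mul_eq₀ hb0] at h4; linarith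
    rwa [h5] at h

noncomputable def E (b k : ℕ) (f : ℝ → ℝ) : ℝ := ∑' l, S b k l f

lemma E_summable (b k : ℕ) (hb : 2 ≤ b) (f : ℝ → ℝ) (C : ℝ) (h : ∀ x, 0 ≤ x → x ≤ 1 → |f x| ≤ C) :
    Summable (fun l => S b k l f) :=
  Summable.of_norm_bounded ((mass b k hb).summable.mul_left C) (fun l => S_abs b k l hb f C h)

lemma E_hasSum (b k : ℕ) (hb : 2 ≤ b) (f : ℝ → ℝ) (C : ℝ) (h : ∀ x, 0 ≤ x → x ≤ 1 → |f x| ≤ C) :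
    HasSum (fun l => S b k l f) (E b k f) := (E_summable b k hb f C h).hasSum

lemma E_abs (b k : ℕ) (hb : 2 ≤ b) (f : ℝ → ℝ) (C : ℝ) (h : ∀ x, 0 ≤ x → x ≤ 1 → |f x| ≤ C) :
    |E b k f| ≤ C * b := by
  rw [E, ← Real.norm_eq_abs]
  exact tsum_of_norm_bounded ((mass b k hb).mul_left C) (fun l => S_abs b k l hb f C h)

lemma E_const (b k : ℕ) (hb : 2 ≤ b) (c : ℝ) : E b k (fun _ => c) = c * b := by
  have := (mass b k hb).mul_left c
  simp_rw [← S_mul, mul_one] at this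
  exact this.tsum_eq

lemma E_mul (b k : ℕ) (c : ℝ) (f : ℝ → ℝ) : E b k (fun x => c * f x) = c * E b k f := by
  simp_rw [E, S_mul, tsum_mul_left]

lemma E_mono (b k : ℕ) (hb : 2 ≤ b) (f g : ℝ → ℝ) (C D : ℝ) (hf : ∀ x, 0 ≤ x → x ≤ 1 → |f x| ≤ C)
    (hg : ∀ x, 0 ≤ x → x ≤ 1 → |g x| ≤ D) (h : ∀ x, 0 ≤ x → x ≤ 1 → f x ≤ g x) :
    E b k f ≤ E b k g :=
  hasSum_le (fun l => S_mono b k l hb f g h) (E_hasSum b k hb f C hf) (E_hasSum b k hb g D hg)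

lemma S_series {ι : Type*} (b k l : ℕ) (hb : 2 ≤ b) (f : ι → ℝ → ℝ) (g : ℝ → ℝ)
    (h : ∀ x, 0 ≤ x → x ≤ 1 → HasSum (fun i => f i x) (g x)) :
    HasSum (fun i => S b k l (f i)) (S b k l g) := by
  apply HasSum.mul_left
  apply hasSum_sum
  intro n hn
  split_ifs
  · apply h
    · positivity
    · have : n < b ^ l := Finset.mem_range.1 hn
      rw [div_le_one (by positivity)]
      exact_mod_cast this.le
  · exact hasSum_zero

lemma E_series {ι : Type*} (b k : ℕ) (hb : 2 ≤ b) (f : ι → ℝ → ℝ) (g : ℝ → ℝ) (C : ι → ℝ)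
    (hC : Summable C) (hb' : ∀ i x, 0 ≤ x → x ≤ 1 → |f i x| ≤ C i)
    (h : ∀ x, 0 ≤ x → x ≤ 1 → HasSum (fun i => f i x) (g x)) :
    HasSum (fun i => E b k (f i)) (E b k g) := by
  have hC0 : ∀ i, 0 ≤ C i := fun i => (abs_nonneg _).trans (hb' i 0 le_rfl zero_le_one)
  have hsum : Summable (fun p : ι × ℕ => S b k p.2 (f p.1)) := by
    refine Summable.of_norm_bounded (g := fun p : ι × ℕ => C p.1 * S b k p.2 (fun _ => 1)) ?_ ?_
    · exact Summable.mul_of_nonneg (f := C) (g := fun l => S b k l (fun _ => 1)) hC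
        (mass b k hb).summable hC0 (fun l => S_one_nonneg _ _ _)
    · intro p; exact S_abs b k p.2 hb _ _ (hb' p.1)
  have h1 := hsum.hasSum.prod_fiberwise (fun i => E_hasSum b k hb (f i) (C i) (hb' i))
  have h2 := ((Equiv.prodComm ℕ ι).hasSum_iff.2 hsum.hasSum).prod_fiberwise
    (fun l => S_series b k l hb f g h)
  have : E b k g = _ := h2.tsum_eq
  rw [this]; exact h1

end Irw

namespace Irw

lemma hs_congr {f g : ℕ → ℝ} {a c : ℝ} (h : HasSum f a) (hf : ∀ i, g i = f i) (hc : c = a) :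
    HasSum g c := by
  have : g = f := funext hf
  rw [this, hc]; exact h

lemma momentU_eq (b k m : ℕ) : momentU b 0 k m = E b k (fun x => x ^ m) := by
  rw [momentU, E]
  congr 1; funext l
  rw [S, pow_mul, pow_succ, mul_inv, mul_comm ((((b : ℝ) ^ l) ^ m)⁻¹), mul_assoc]
  congr 1
  rw [Finset.mul_sum]
  apply Finset.sum_congr rfl
  intro n _
  by_cases h : cnt b l n = k
  · rw [if_pos h]; unfold cnt at h; rw [if_pos h, div_pow]; ring
  · rw [if_neg h]; unfold cnt at h; rw [if_neg h, mul_zero]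

lemma zeta_summable (s : ℕ) (hs : 2 ≤ s) : Summable (fun n : ℕ => 1 / ((n : ℝ) + 1) ^ s) := by
  have := (summable_nat_add_iff 1).2 (Real.summable_one_div_nat_pow (p := s) |>.2 (by omega))
  simpa using this

noncomputable def F (b : ℕ) (p : ℕ × ℕ) (x : ℝ) : ℝ :=
  ((-1) ^ p.1 / (b : ℝ) ^ (p.1 + 2) * (1 / ((p.2 : ℝ) + 1) ^ (p.1 + 2))) * x ^ (p.1 + 1)

noncomputable def H (b n : ℕ) (x : ℝ) : ℝ :=
  1 / (((n + 1) * b : ℕ) : ℝ) - 1 / ((((n + 1) * b : ℕ) : ℝ) + x)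

noncomputable def C (p : ℕ × ℕ) : ℝ := (1 / 2) ^ p.1 * (1 / ((p.2 : ℝ) + 1) ^ 2)

lemma C_summable : Summable C :=
  Summable.mul_of_nonneg (f := fun j : ℕ => (1 / 2 : ℝ) ^ j)
    (g := fun n : ℕ => 1 / ((n : ℝ) + 1) ^ 2) summable_geometric_two (zeta_summable 2 le_rfl)
    (fun j => by positivity) (fun n => by positivity)

lemma F_bound (b : ℕ) (hb : 2 ≤ b) (p : ℕ × ℕ) (x : ℝ) (h0 : 0 ≤ x) (h1 : x ≤ 1) :
    |F b p x| ≤ C p := by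
  obtain ⟨j, n⟩ := p
  have hb2 : (2 : ℝ) ≤ b := by exact_mod_cast hb
  have hn : (1 : ℝ) ≤ (n : ℝ) + 1 := by linarith [(Nat.cast_nonneg n : (0:ℝ) ≤ n)]
  simp only [F, C, abs_mul, abs_div, abs_pow, abs_neg, abs_one, one_pow, Nat.abs_cast,
    abs_of_nonneg h0, abs_of_nonneg (zero_le_one.trans hn)]
  rw [one_div_pow]
  have e1 : 1 / (b : ℝ) ^ (j + 2) ≤ 1 / 2 ^ j := by
    apply one_div_le_one_div_of_le (by positivity)
    calc (2 : ℝ) ^ j ≤ b ^ j := by gcongr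
      _ ≤ b ^ (j + 2) := pow_le_pow_right₀ (by linarith) (by omega)
  have e2 : 1 / ((n : ℝ) + 1) ^ (j + 2) ≤ 1 / ((n : ℝ) + 1) ^ 2 := by
    apply one_div_le_one_div_of_le (by positivity)
    exact pow_le_pow_right₀ hn (by omega)
  have e3 : x ^ (j + 1) ≤ 1 := pow_le_one₀ h0 h1
  calc _ ≤ (1 / 2 ^ j * (1 / ((n : ℝ) + 1) ^ 2)) * 1 := by gcongr
    _ = _ := by ring

lemma F_hasSum_fst (b : ℕ) (hb : 2 ≤ b) (n : ℕ) (x : ℝ) (h0 : 0 ≤ x) (h1 : x ≤ 1) :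
    HasSum (fun j => F b (j, n) x) (H b n x) := by
  have hb2 : (2 : ℝ) ≤ b := by exact_mod_cast hb
  have hn : (1 : ℝ) ≤ (n : ℝ) + 1 := by linarith [(Nat.cast_nonneg n : (0:ℝ) ≤ n)]
  have hq : (2 : ℝ) ≤ ((n : ℝ) + 1) * b := by nlinarith
  have hH : H b n x = x / (((n : ℝ) + 1) * b) ^ 2 * (1 - -(x / (((n : ℝ) + 1) * b)))⁻¹ := by
    rw [H]; push_cast
    generalize ((n : ℝ) + 1) * b = q at hq
    have : q ≠ 0 := by linarith
    have : q + x ≠ 0 := by linarith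
    have h3 : (1 - -(x / q)) = (q + x) / q := by field_simp; ring
    rw [h3]
    field_simp; ring
  rw [hH]
  have hg := (hasSum_geometric_of_abs_lt_one (r := -(x / (((n : ℝ) + 1) * b))) (by
    rw [abs_neg, abs_of_nonneg (by positivity), div_lt_one (by linarith)]; linarith)).mul_left
      (x / (((n : ℝ) + 1) * b) ^ 2)
  refine hs_congr hg (fun j => ?_) rfl
  simp only [F]
  rw [neg_pow (x / _), div_pow, mul_pow, mul_pow, pow_add, pow_add, pow_add]
  have : (b : ℝ) ≠ 0 := by positivity
  have : (n : ℝ) + 1 ≠ 0 := by positivity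
  field_simp

lemma series_main (b k : ℕ) (hb : 2 ≤ b) : ∃ T : ℝ,
    HasSum (fun j : ℕ => (-1 : ℝ) ^ j * zetaR (j + 2) * momentU b 0 k (j + 1) / (b : ℝ) ^ (j + 2)) T ∧
    HasSum (fun n : ℕ => E b k (H b n)) T := by
  have hall := E_series b k hb (F b) (fun x => ∑' p, F b p x) C C_summable (F_bound b hb)
    (fun x h0 h1 => (Summable.of_norm_bounded C_summable (fun p => F_bound b hb p x h0 h1)).hasSum)
  refine ⟨_, hall.prod_fiberwise ?_, ((Equiv.prodComm ℕ ℕ).hasSum_iff.2 hall).prod_fiberwise ?_⟩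
  · intro j
    have hz : HasSum (fun n : ℕ => 1 / ((n : ℝ) + 1) ^ (j + 2)) (zetaR (j + 2)) :=
      (zeta_summable (j + 2) (by omega)).hasSum
    have h := (hz.mul_left ((-1) ^ j / (b : ℝ) ^ (j + 2))).mul_right (momentU b 0 k (j + 1))
    refine hs_congr h (fun n => ?_) ?_
    · rw [momentU_eq, ← E_mul]; rfl
    · ring
  · intro n
    refine E_series b k hb (fun j => F b (j, n)) (H b n) (fun j => C (j, n)) ?_
      (fun j => F_bound b hb (j, n)) (F_hasSum_fst b hb n)
    exact summable_geometric_two.mul_right (1 / ((n : ℝ) + 1) ^ 2)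

noncomputable def U (b k j : ℕ) : ℝ := E b k (fun x => 1 / ((j : ℝ) + x))

lemma U_bd (j : ℕ) (hj : 1 ≤ j) (x : ℝ) (h0 : 0 ≤ x) (_ : x ≤ 1) : |1 / ((j : ℝ) + x)| ≤ 1 / (j : ℝ) := by
  have : (1 : ℝ) ≤ j := by exact_mod_cast hj
  rw [abs_of_nonneg (by positivity)]
  apply one_div_le_one_div_of_le <;> linarith

lemma U_hasSum (b k j : ℕ) (hb : 2 ≤ b) (hj : 1 ≤ j) :
    HasSum (fun l => S b k l (fun x => 1 / ((j : ℝ) + x))) (U b k j) :=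
  E_hasSum b k hb _ _ (U_bd j hj)

lemma U_le (b k j : ℕ) (hb : 2 ≤ b) (hj : 1 ≤ j) : U b k j ≤ b * (1 / (j : ℝ)) :=
  (le_abs_self _).trans ((E_abs b k hb _ _ (U_bd j hj)).trans_eq (mul_comm _ _))

lemma le_U (b k j : ℕ) (hb : 2 ≤ b) (hj : 1 ≤ j) : b * (1 / ((j : ℝ) + 1)) ≤ U b k j := by
  have : (1 : ℝ) ≤ j := by exact_mod_cast hj
  rw [mul_comm, ← E_const b k hb]
  refine E_mono b k hb _ _ _ _ (fun _ _ _ => le_rfl) (U_bd j hj) ?_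
  intro x h0 h1
  apply one_div_le_one_div_of_le <;> linarith

lemma E_H (b k n : ℕ) (hb : 2 ≤ b) :
    E b k (H b n) = 1 / (((n + 1) * b : ℕ) : ℝ) * b - U b k ((n + 1) * b) := by
  have hj : 1 ≤ (n + 1) * b := Nat.mul_pos (by omega) (by omega)
  rw [← E_const b k hb]
  have h := (E_hasSum b k hb (fun _ => 1 / (((n + 1) * b : ℕ) : ℝ)) _ (fun _ _ _ => le_rfl)).sub
    (U_hasSum b k _ hb hj)
  simp_rw [← S_sub] at h
  exact h.tsum_eq

lemma U_rec (b k n : ℕ) (hb : 2 ≤ b) (hn : 1 ≤ n) :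
    U b (k + 1) n = U b k (n * b) + ∑ a ∈ Finset.Ico 1 b, U b (k + 1) (n * b + a) := by
  have hj : 1 ≤ n * b := Nat.mul_pos (by omega) (by omega)
  have hn' : (1 : ℝ) ≤ n := by exact_mod_cast hn
  have hb0 : (0 : ℝ) < b := by positivity
  have h1 := U_hasSum b (k + 1) n hb hn
  have h2 := (U_hasSum b k (n * b) hb hj).add
    (hasSum_sum (s := Finset.Ico 1 b) (fun a _ => U_hasSum b (k + 1) (n * b + a) hb (by omega)))
  rw [← hasSum_nat_add_iff' 1] at h1
  simp only [Finset.sum_range_one, S_zero_succ, sub_zero] at h1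
  refine h1.unique ?_
  refine hs_congr h2 (fun l => ?_) rfl
  rw [S_succ b k l hb, mul_add, Finset.mul_sum, ← S_mul]
  congr 1
  · apply S_congr b k l hb
    intro x h0 h1
    have : (n : ℝ) * b + x ≠ 0 := by positivity
    have : (n : ℝ) + x / b ≠ 0 := by positivity
    push_cast; field_simp
  · apply Finset.sum_congr rfl
    intro a ha
    rw [← S_mul]
    apply S_congr b (k + 1) l hb
    intro x h0 h1
    have : (n : ℝ) * b + a + x ≠ 0 := by positivity
    have : (n : ℝ) + (a + x) / b ≠ 0 := by positivity
    push_cast; field_simp; try ring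

lemma telescope (b k : ℕ) (hb : 2 ≤ b) (N : ℕ) :
    ∑ j ∈ Finset.Ico 1 b, U b (k + 1) j = ∑ j ∈ Finset.Ico (N + 1) ((N + 1) * b), U b (k + 1) j
      + ∑ n ∈ Finset.range N, (E b (k + 1) (H b n) - E b k (H b n)) := by
  induction N with
  | zero => simp
  | succ N ih =>
    rw [ih, Finset.sum_range_succ, E_H b _ _ hb, E_H b _ _ hb]
    have hlt : N + 1 < (N + 1) * b := by nlinarith
    have h1 := Finset.sum_eq_sum_Ico_succ_bot hlt (U b (k + 1))
    have h2 := Finset.sum_Ico_consecutive (U b (k + 1)) (m := N + 1 + 1) (n := (N + 1) * b)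
      (k := (N + 1 + 1) * b) hlt (by nlinarith)
    have h3 : ∑ j ∈ Finset.Ico ((N + 1) * b) ((N + 1 + 1) * b), U b (k + 1) j =
        U b (k + 1) ((N + 1) * b) + ∑ a ∈ Finset.Ico 1 b, U b (k + 1) ((N + 1) * b + a) := by
      rw [Finset.sum_Ico_eq_sum_range, show (N + 1 + 1) * b - (N + 1) * b = b by
        rw [add_mul (N+1), one_mul]; omega, Finset.range_eq_Ico,
        Finset.sum_eq_sum_Ico_succ_bot (by omega)]
      simp
    have h4 := U_rec b k (N + 1) hb (by omega)
    linarith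

lemma harm (N M : ℕ) (h : N ≤ M) :
    ∑ j ∈ Finset.Ico N M, 1 / ((j : ℝ) + 1) = (harmonic M : ℝ) - harmonic N := by
  rw [Finset.sum_Ico_eq_sub _ h]
  simp [harmonic]

lemma harm_lim (b : ℕ) (hb : 2 ≤ b) :
    Tendsto (fun N : ℕ => (harmonic (N * b) : ℝ) - harmonic N) atTop (nhds (Real.log b)) := by
  have h1 := Real.tendsto_harmonic_sub_log
  have h2 := h1.comp (tendsto_id.atTop_mul_const' (show 0 < b by omega))
  have h3 := (h2.sub h1).add_const (Real.log b)
  simp only [sub_self, zero_add] at h3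
  refine h3.congr' ?_
  filter_upwards [eventually_gt_atTop 0] with N hN
  have : (N : ℝ) ≠ 0 := by positivity
  have : (b : ℝ) ≠ 0 := by positivity
  simp only [Function.comp, id]
  push_cast
  rw [Real.log_mul (by assumption) (by assumption)]
  ring

lemma U_lim (b k : ℕ) (hb : 2 ≤ b) :
    Tendsto (fun N : ℕ => ∑ j ∈ Finset.Ico (N + 1) ((N + 1) * b), U b k j) atTop
      (nhds (b * Real.log b)) := by
  have hl := ((harm_lim b hb).comp (tendsto_add_atTop_nat 1)).const_mul (b : ℝ)
  have hu : Tendsto (fun N : ℕ => (b : ℝ) * ((harmonic ((N + 1) * b) : ℝ) - harmonic (N + 1)) +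
      b * (1 / ((N : ℝ) + 1))) atTop (nhds (b * Real.log b)) := by
    simpa using hl.add (tendsto_one_div_add_atTop_nhds_zero_nat.const_mul (b : ℝ))
  refine tendsto_of_tendsto_of_tendsto_of_le_of_le hl hu ?_ ?_
  · intro N
    have hle : N + 1 ≤ (N + 1) * b := by nlinarith
    simp only [Function.comp]
    rw [← harm _ _ hle, Finset.mul_sum]
    apply Finset.sum_le_sum
    intro j hj
    exact le_U b k j hb (by have := (Finset.mem_Ico.1 hj).1; omega)
  · intro N
    have hle : N + 1 ≤ (N + 1) * b := by nlinarith
    have hle2 : N ≤ (N + 1) * b - 1 := by omega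
    show _ ≤ (b : ℝ) * ((harmonic ((N + 1) * b) : ℝ) - harmonic (N + 1)) + b * (1 / ((N : ℝ) + 1))
    have e : ∑ j ∈ Finset.Ico (N + 1) ((N + 1) * b), 1 / (j : ℝ) =
        (harmonic ((N + 1) * b - 1) : ℝ) - harmonic N := by
      rw [← harm _ _ hle2, Finset.sum_Ico_eq_sum_range, Finset.sum_Ico_eq_sum_range]
      rw [show (N + 1) * b - (N + 1) = (N + 1) * b - 1 - N by omega]
      apply Finset.sum_congr rfl
      intros; push_cast; ring
    have e2 : (harmonic (N + 1) : ℝ) = harmonic N + 1 / ((N : ℝ) + 1) := by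
      rw [harmonic_succ]; push_cast; ring
    have e3 : (harmonic ((N + 1) * b - 1) : ℝ) ≤ harmonic ((N + 1) * b) := by
      obtain ⟨t, ht⟩ : ∃ t, (N + 1) * b = t + 1 := ⟨(N + 1) * b - 1, by omega⟩
      rw [ht, Nat.add_sub_cancel, harmonic_succ]; push_cast
      linarith [show (0 : ℝ) ≤ ((t : ℝ) + 1)⁻¹ by positivity]
    calc _ ≤ ∑ j ∈ Finset.Ico (N + 1) ((N + 1) * b), b * (1 / (j : ℝ)) := by
          apply Finset.sum_le_sum
          intro j hj
          exact U_le b k j hb (by have := (Finset.mem_Ico.1 hj).1; omega)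
      _ = b * ((harmonic ((N + 1) * b - 1) : ℝ) - harmonic N) := by rw [← Finset.mul_sum, e]
      _ ≤ b * ((harmonic ((N + 1) * b) : ℝ) - harmonic N) := by gcongr
      _ = _ := by rw [e2]; ring

lemma irwin_partial (b k : ℕ) (hb : 2 ≤ b) (L : ℕ) :
    ∑ m ∈ Finset.range (b ^ L), (if 0 < m ∧ (Nat.digits b m).count 0 = k then (1 : ℝ) / m else 0) =
      ∑ l ∈ Finset.range L, ∑ a ∈ Finset.Ico 1 b, S b k l (fun x => 1 / ((a : ℝ) + x)) := by
  induction L with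
  | zero => simp
  | succ L ih =>
    rw [sum_range_pow_succ b L hb, ih, Finset.sum_range_succ]
    congr 1
    apply Finset.sum_congr rfl
    intro a ha
    have ha := Finset.mem_Ico.1 ha
    rw [S, Finset.mul_sum]
    apply Finset.sum_congr rfl
    intro r hr
    have hr := Finset.mem_range.1 hr
    have hp : 0 < b ^ L := by positivity
    have hle : b ^ L ≤ a * b ^ L := Nat.le_mul_of_pos_left _ (by omega)
    have hlt : a * b ^ L + r < b ^ (L + 1) := by
      have : (a + 1) * b ^ L ≤ b * b ^ L := Nat.mul_le_mul_right _ (by omega)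
      rw [pow_succ']; linarith
    rw [digits_count b hb L _ (by omega) hlt, cnt_top b L a r hb (by omega) hr,
      if_neg (show a ≠ 0 by omega), add_zero]
    have hpos : 0 < a * b ^ L + r := by omega
    simp only [hpos, true_and]
    split_ifs
    · have : (b : ℝ) ^ L ≠ 0 := by positivity
      push_cast
      rw [one_div, one_div, ← mul_inv, mul_add, mul_div_cancel₀ _ this, mul_comm (a : ℝ)]
    · simp

lemma irwin_eq (b k : ℕ) (hb : 2 ≤ b) : irwinSum b 0 k = ∑ a ∈ Finset.Ico 1 b, U b k a := by
  have hU := hasSum_sum (s := Finset.Ico 1 b)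
    (fun a ha => U_hasSum b k a hb (Finset.mem_Ico.1 ha).1)
  have h0 : ∀ m : ℕ, (0 : ℝ) ≤ if 0 < m ∧ (Nat.digits b m).count 0 = k then (1 : ℝ) / m else 0 := by
    intro m; split_ifs <;> positivity
  have hS : Summable (fun m : ℕ => if 0 < m ∧ (Nat.digits b m).count 0 = k then (1 : ℝ) / m else 0) := by
    apply summable_of_sum_range_le (c := ∑ a ∈ Finset.Ico 1 b, U b k a) h0
    intro n
    calc _ ≤ ∑ m ∈ Finset.range (b ^ n),
          (if 0 < m ∧ (Nat.digits b m).count 0 = k then (1 : ℝ) / m else 0) := by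
          apply Finset.sum_le_sum_of_subset_of_nonneg
          · apply Finset.range_subset_range.2
            exact (Nat.lt_pow_self (by omega)).le
          · intros; apply h0
      _ ≤ _ := by
          rw [irwin_partial b k hb]
          apply sum_le_hasSum _ _ hU
          intro l _
          apply Finset.sum_nonneg
          intro a ha
          apply mul_nonneg (by positivity)
          apply Finset.sum_nonneg; intros; split_ifs <;> positivity
  have t1 := hS.hasSum.tendsto_sum_nat.comp (tendsto_pow_atTop_atTop_of_one_lt (show 1 < b by omega))
  have t2 := hU.tendsto_sum_nat
  refine tendsto_nhds_unique t1 (t2.congr fun L => (irwin_partial b k hb L).symm)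

end Irw

/-- Exact convergent series (indexed so that `m ≥ 1` corresponds to `m = j + 1`):
`I(b,0,k) = b log b + ∑_{m≥1} (−1)^{m−1} ζ(m+1)(u_{k;m}(b,0) − u_{k−1;m}(b,0)) / b^{m+1}`,
the series converging absolutely. -/
theorem irwin_zero_k_series (b k : ℕ) (hb : 2 ≤ b) (hk : 1 ≤ k) :
    Summable (fun j : ℕ =>
      |(-1 : ℝ) ^ j * zetaR (j + 2) * (momentU b 0 k (j + 1) - momentU b 0 (k - 1) (j + 1))
        / (b : ℝ) ^ (j + 2)|) ∧
    irwinSum b 0 k = (b : ℝ) * Real.log b +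
      ∑' j : ℕ, (-1 : ℝ) ^ j * zetaR (j + 2) *
        (momentU b 0 k (j + 1) - momentU b 0 (k - 1) (j + 1)) / (b : ℝ) ^ (j + 2) := by
  obtain ⟨k, rfl⟩ : ∃ t, k = t + 1 := ⟨k - 1, by omega⟩
  simp only [Nat.add_sub_cancel]
  obtain ⟨T, hT1, hT2⟩ := Irw.series_main b (k + 1) hb
  obtain ⟨T', hT1', hT2'⟩ := Irw.series_main b k hb
  have h : HasSum (fun j : ℕ => (-1 : ℝ) ^ j * zetaR (j + 2) *
      (momentU b 0 (k + 1) (j + 1) - momentU b 0 k (j + 1)) / (b : ℝ) ^ (j + 2)) (T - T') := by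
    exact Irw.hs_congr (hT1.sub hT1') (fun j => by ring) rfl
  refine ⟨h.summable.abs, ?_⟩
  rw [h.tsum_eq, Irw.irwin_eq b _ hb]
  have t := (Irw.U_lim b (k + 1) hb).add (hT2.sub hT2').tendsto_sum_nat
  exact tendsto_nhds_unique (tendsto_const_nhds.congr (Irw.telescope b k hb)) t
end

section
/- For all integers b, d with 0 < d < b, the exact convergent-series identity holds: I(b,d,1) = b·log b + ∑_{m=1}^∞ (−1)^{m−1}(u_{1;m}(b,d) − u_{0;m}(b,d))·( ∑_{n=1}^∞ 1/(bn + d)^{m+1} + ∑_{0 ≤ a < b, a ≠ d} 1/(bd + a)^{m+1} ) + 1/(bd + d) + ∑_{m=1}^∞ (−1)^{m−1} u_{0;m}(b,d)/(bd + d)^{m+1}, where all the series converge. -/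
open Filter Asymptotics

namespace IrwinAux

/-- number of digits equal to `d` among the lowest `l` digits -/
def cnt (b d l n : ℕ) : ℕ := ((Finset.range l).filter fun i => n / b ^ i % b = d).card

/-- sum over strings of length `l` with `k` digits `d` -/
noncomputable def T (b d k l : ℕ) (f : ℕ → ℝ) : ℝ :=
  ∑ n ∈ Finset.range (b ^ l), if cnt b d l n = k then f n else 0

lemma sum_blocks (q p r : ℕ) (h : p ≤ r) (g : ℕ → ℝ) :
    ∑ m ∈ Finset.Ico (p * q) (r * q), g m
      = ∑ a ∈ Finset.Ico p r, ∑ t ∈ Finset.range q, g (a * q + t) := by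
  induction r, h using Nat.le_induction with
  | base => simp
  | succ r h ih =>
    rw [Finset.sum_Ico_succ_top h, ← ih,
      ← Finset.sum_Ico_consecutive g (Nat.mul_le_mul_right q h)
        (Nat.mul_le_mul_right q (Nat.le_succ r)), Finset.sum_Ico_eq_sum_range g (r * q)]
    congr 2
    rw [Nat.succ_mul]; simp

lemma cnt_high (b d l a t : ℕ) (ha : a < b) (ht : t < b ^ l) :
    cnt b d (l + 1) (a * b ^ l + t) = cnt b d l t + if a = d then 1 else 0 := by
  have hb : 0 < b := by omega
  unfold cnt
  rw [Finset.card_filter, Finset.card_filter, Finset.sum_range_succ]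
  congr 1
  · apply Finset.sum_congr rfl
    intro i hi
    have hi' : i < l := Finset.mem_range.1 hi
    have : (a * b ^ l + t) / b ^ i % b = t / b ^ i % b := by
      obtain ⟨e, rfl⟩ : ∃ e, l = i + e + 1 := ⟨l - i - 1, by omega⟩
      have : a * b ^ (i + e + 1) + t = t + b ^ i * (b * (a * b ^ e)) := by ring
      rw [this, Nat.add_mul_div_left _ _ (by positivity), Nat.add_mul_mod_self_left]
    rw [this]
  · have : (a * b ^ l + t) / b ^ l % b = a := by
      rw [add_comm, Nat.add_mul_div_right _ _ (by positivity), Nat.div_eq_of_lt ht, zero_add,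
        Nat.mod_eq_of_lt ha]
    rw [this]

lemma cnt_low (b d l n : ℕ) :
    cnt b d (l + 1) n = cnt b d l (n / b) + if n % b = d then 1 else 0 := by
  unfold cnt
  rw [Finset.card_filter, Finset.card_filter, Finset.sum_range_succ']
  simp [Nat.div_div_eq_div_mul, pow_succ']

lemma digits_cnt (b d : ℕ) (hb : 1 < b) (l : ℕ) : ∀ m, b ^ l ≤ m → m < b ^ (l + 1) →
    (Nat.digits b m).count d = cnt b d (l + 1) m := by
  induction l with
  | zero =>
    intro m h1 h2
    have h1 : 1 ≤ m := by simpa using h1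
    have h2 : m < b := by simpa using h2
    rw [Nat.digits_of_lt b m (by omega) h2, cnt_low, Nat.mod_eq_of_lt h2]
    simp [cnt, List.count_cons]
  | succ l ih =>
    intro m h1 h2
    have hm : 0 < m := lt_of_lt_of_le (by positivity) h1
    rw [Nat.digits_def' hb hm, List.count_cons, cnt_low, ih]
    · simp
    · rw [Nat.le_div_iff_mul_le (by omega), ← pow_succ]; exact h1
    · rw [Nat.div_lt_iff_lt_mul (by omega), ← pow_succ]; exact h2

lemma T_one_succ (b d l : ℕ) (f : ℕ → ℝ) : T b d 1 (l + 1) f =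
    ∑ a ∈ Finset.range b, T b d (if a = d then 0 else 1) l (fun t => f (a * b ^ l + t)) := by
  unfold T
  have := sum_blocks (b ^ l) 0 b (Nat.zero_le _)
    (fun n => if cnt b d (l + 1) n = 1 then f n else 0)
  rw [zero_mul, ← pow_succ', ← Finset.range_eq_Ico, ← Finset.range_eq_Ico] at this
  rw [this]
  refine Finset.sum_congr rfl fun a ha => Finset.sum_congr rfl fun t ht => ?_
  rw [cnt_high b d l a t (Finset.mem_range.1 ha) (Finset.mem_range.1 ht)]
  by_cases h : a = d <;> simp [h]

lemma T_zero_succ (b d l : ℕ) (f : ℕ → ℝ) : T b d 0 (l + 1) f =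
    ∑ a ∈ Finset.range b, if a = d then 0 else T b d 0 l (fun t => f (a * b ^ l + t)) := by
  unfold T
  have := sum_blocks (b ^ l) 0 b (Nat.zero_le _)
    (fun n => if cnt b d (l + 1) n = 0 then f n else 0)
  rw [zero_mul, ← pow_succ', ← Finset.range_eq_Ico, ← Finset.range_eq_Ico] at this
  rw [this]
  refine Finset.sum_congr rfl fun a ha => ?_
  by_cases h : a = d
  · simp only [h, if_true]
    refine Finset.sum_eq_zero fun t ht => ?_
    have := cnt_high b d l a t (Finset.mem_range.1 ha) (Finset.mem_range.1 ht)
    rw [h] at this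
    rw [this]; simp
  · simp only [h, if_false]
    refine Finset.sum_congr rfl fun t ht => ?_
    rw [cnt_high b d l a t (Finset.mem_range.1 ha) (Finset.mem_range.1 ht)]
    simp [h]

lemma T_mono (b d k l : ℕ) (f g : ℕ → ℝ) (h : ∀ n < b ^ l, f n ≤ g n) :
    T b d k l f ≤ T b d k l g := by
  unfold T
  refine Finset.sum_le_sum fun n hn => ?_
  split_ifs
  · exact h n (Finset.mem_range.1 hn)
  · exact le_rfl

lemma T_smul (b d k l : ℕ) (c : ℝ) (f : ℕ → ℝ) :
    T b d k l (fun n => c * f n) = c * T b d k l f := by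
  unfold T
  rw [Finset.mul_sum]
  refine Finset.sum_congr rfl fun n hn => ?_
  split_ifs <;> simp

lemma T_sub (b d k l : ℕ) (f g : ℕ → ℝ) :
    T b d k l (fun n => f n - g n) = T b d k l f - T b d k l g := by
  unfold T
  rw [← Finset.sum_sub_distrib]
  refine Finset.sum_congr rfl fun n hn => ?_
  split_ifs <;> simp

lemma T_hasSum (b d k l : ℕ) (f : ℕ → ℕ → ℝ) (g : ℕ → ℝ)
    (h : ∀ n < b ^ l, HasSum (fun j => f j n) (g n)) :
    HasSum (fun j => T b d k l (f j)) (T b d k l g) := by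
  unfold T
  refine hasSum_sum fun n hn => ?_
  split_ifs
  · exact h n (Finset.mem_range.1 hn)
  · exact hasSum_zero

lemma sum_ite_range (b d : ℕ) (hdb : d < b) (x y : ℝ) :
    ∑ a ∈ Finset.range b, (if a = d then x else y) = x + (b - 1) * y := by
  have : ∀ a ∈ Finset.range b, (if a = d then x else y) = (if a = d then x - y else 0) + y := by
    intro a _; split_ifs <;> ring
  rw [Finset.sum_congr rfl this, Finset.sum_add_distrib, Finset.sum_ite_eq']
  simp [hdb]; ring

lemma w_zero (b d : ℕ) (hdb : d < b) (l : ℕ) : T b d 0 l (fun _ => 1) = ((b : ℝ) - 1) ^ l := by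
  induction l with
  | zero => simp [T, cnt]
  | succ l ih =>
    rw [T_zero_succ]
    simp only [ih]
    rw [sum_ite_range b d hdb]; ring

lemma w_one (b d : ℕ) (hd : 0 < d) (hdb : d < b) (l : ℕ) :
    T b d 1 l (fun _ => 1) = l * ((b : ℝ) - 1) ^ l / (b - 1) := by
  have hb : (b : ℝ) - 1 ≠ 0 := by
    have : (1 : ℝ) < b := by exact_mod_cast (by omega : 1 < b)
    linarith
  induction l with
  | zero => simp [T, cnt]
  | succ l ih =>
    rw [T_one_succ]
    have : ∀ a ∈ Finset.range b, T b d (if a = d then 0 else 1) l (fun _ => 1)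
        = if a = d then ((b : ℝ) - 1) ^ l else l * ((b : ℝ) - 1) ^ l / (b - 1) := by
      intro a _; split_ifs
      · exact w_zero b d hdb l
      · exact ih
    rw [Finset.sum_congr rfl this, sum_ite_range b d hdb]
    field_simp
    push_cast; ring

/-- the normalised weight -/
noncomputable def V (b d k l : ℕ) : ℝ := ((b : ℝ) ^ l)⁻¹ * T b d k l (fun _ => 1)

lemma V_nonneg (b d k l : ℕ) : 0 ≤ V b d k l := by
  unfold V T
  refine mul_nonneg (by positivity) (Finset.sum_nonneg fun n _ => ?_)
  split_ifs <;> simp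

lemma V_hasSum (b d k : ℕ) (hd : 0 < d) (hdb : d < b) (hk : k ≤ 1) : HasSum (V b d k) b := by
  have h1 : (1 : ℝ) < b := by exact_mod_cast (by omega : 1 < b)
  have hb : (b : ℝ) - 1 ≠ 0 := by linarith
  have hb0 : (b : ℝ) ≠ 0 := by linarith
  have hr0 : 0 ≤ ((b : ℝ) - 1) / b := div_nonneg (by linarith) (by linarith)
  have hr1 : ((b : ℝ) - 1) / b < 1 := by rw [div_lt_one (by linarith)]; linarith
  interval_cases k
  · have := hasSum_geometric_of_lt_one hr0 hr1
    convert this using 1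
    · funext l; rw [V, w_zero b d hdb, div_pow]; field_simp
    · field_simp; ring
  · have := (hasSum_coe_mul_geometric_of_norm_lt_one
      (by rwa [Real.norm_of_nonneg hr0] : ‖((b : ℝ) - 1) / b‖ < 1)).div_const ((b : ℝ) - 1)
    convert this using 1
    · rfl
    · funext l; rw [V, w_one b d hd hdb, div_pow]; field_simp
    · have : 1 - ((b : ℝ) - 1) / b = 1 / b := by field_simp; ring
      rw [this]; field_simp

/-- term of the moment series -/
noncomputable def A (b d k m l : ℕ) : ℝ :=
  ((b : ℝ) ^ l)⁻¹ * T b d k l (fun s => ((s : ℝ) / b ^ l) ^ m)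

lemma momentU_eq (b d k m : ℕ) (hb : 0 < b) : momentU b d k m = ∑' l, A b d k m l := by
  unfold momentU A
  congr 1; funext l
  have : (fun s : ℕ => ((s : ℝ) / b ^ l) ^ m) = fun s : ℕ => (((b : ℝ) ^ l) ^ m)⁻¹ * (s : ℝ) ^ m := by
    funext s; rw [div_pow]; ring
  rw [this, T_smul, ← mul_assoc]
  congr 1
  rw [← mul_inv, ← pow_succ', ← pow_mul]

lemma A_bounds (b d k m l : ℕ) (hb : 0 < b) : 0 ≤ A b d k m l ∧ A b d k m l ≤ V b d k l := by
  have hbl : (0 : ℝ) < (b : ℝ) ^ l := by positivity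
  constructor
  · unfold A T
    refine mul_nonneg (by positivity) (Finset.sum_nonneg fun n _ => ?_)
    split_ifs
    · positivity
    · simp
  · unfold A V
    gcongr
    apply T_mono
    intro n hn
    apply pow_le_one₀ (by positivity)
    rw [div_le_one hbl]
    exact_mod_cast hn.le

lemma A_summable (b d k m : ℕ) (hd : 0 < d) (hdb : d < b) (hk : k ≤ 1) :
    Summable (A b d k m) :=
  Summable.of_nonneg_of_le (fun l => (A_bounds b d k m l (by omega)).1)
    (fun l => (A_bounds b d k m l (by omega)).2) (V_hasSum b d k hd hdb hk).summable

lemma momentU_bounds (b d k m : ℕ) (hd : 0 < d) (hdb : d < b) (hk : k ≤ 1) :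
    0 ≤ momentU b d k m ∧ momentU b d k m ≤ b := by
  rw [momentU_eq b d k m (by omega)]
  constructor
  · exact tsum_nonneg fun l => (A_bounds b d k m l (by omega)).1
  · rw [← (V_hasSum b d k hd hdb hk).tsum_eq]
    exact (A_summable b d k m hd hdb hk).tsum_le_tsum
      (fun l => (A_bounds b d k m l (by omega)).2) (V_hasSum b d k hd hdb hk).summable

/-- term of `∫ 1/(n+x) dμ_k` -/
noncomputable def Fl (b d k n l : ℕ) : ℝ :=
  T b d k l (fun s => 1 / (((n * b ^ l + s : ℕ)) : ℝ))

noncomputable def F (b d k n : ℕ) : ℝ := ∑' l, Fl b d k n l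

lemma Fl_bounds (b d k n l : ℕ) (hb : 0 < b) (hn : 0 < n) :
    (1 / ((n : ℝ) + 1)) * V b d k l ≤ Fl b d k n l ∧ Fl b d k n l ≤ (1 / (n : ℝ)) * V b d k l := by
  have hbl : (0 : ℝ) < (b : ℝ) ^ l := by positivity
  have hn' : (0 : ℝ) < n := by exact_mod_cast hn
  unfold V Fl
  rw [← mul_assoc, ← mul_assoc, ← T_smul, ← T_smul]
  constructor
  · apply T_mono
    intro s hs
    have : (s : ℝ) ≤ b ^ l := by exact_mod_cast hs.le
    rw [mul_one, one_div, ← mul_inv, one_div]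
    push_cast
    gcongr
    nlinarith
  · apply T_mono
    intro s hs
    rw [mul_one, one_div, one_div, ← mul_inv]
    push_cast
    gcongr
    simp

lemma Fl_nonneg (b d k n l : ℕ) : 0 ≤ Fl b d k n l := by
  unfold Fl T
  refine Finset.sum_nonneg fun n _ => ?_
  split_ifs
  · positivity
  · simp

lemma Fl_summable (b d k n : ℕ) (hd : 0 < d) (hdb : d < b) (hk : k ≤ 1) (hn : 0 < n) :
    Summable (Fl b d k n) :=
  Summable.of_nonneg_of_le (fun l => Fl_nonneg b d k n l)
    (fun l => (Fl_bounds b d k n l (by omega) hn).2)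
    ((V_hasSum b d k hd hdb hk).summable.mul_left _)

lemma F_bounds (b d k n : ℕ) (hd : 0 < d) (hdb : d < b) (hk : k ≤ 1) (hn : 0 < n) :
    b * (1 / ((n : ℝ) + 1)) ≤ F b d k n ∧ F b d k n ≤ b * (1 / (n : ℝ)) := by
  have hV := V_hasSum b d k hd hdb hk
  constructor
  · rw [mul_comm]
    exact hasSum_le (fun l => (Fl_bounds b d k n l (by omega) hn).1) (hV.mul_left _)
      (Fl_summable b d k n hd hdb hk hn).hasSum
  · rw [mul_comm]
    exact hasSum_le (fun l => (Fl_bounds b d k n l (by omega) hn).2)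
      (Fl_summable b d k n hd hdb hk hn).hasSum (hV.mul_left _)

lemma F_one_eq (b d n : ℕ) (hd : 0 < d) (hdb : d < b) (hn : 0 < n) :
    F b d 1 n = ∑ a ∈ Finset.range b, F b d (if a = d then 0 else 1) (n * b + a) := by
  have h0 : Fl b d 1 n 0 = 0 := by simp [Fl, T, cnt]
  unfold F
  rw [(Fl_summable b d 1 n hd hdb le_rfl hn).tsum_eq_zero_add, h0, zero_add,
    ← Summable.tsum_finsetSum]
  · congr 1; funext l
    unfold Fl
    rw [T_one_succ]
    refine Finset.sum_congr rfl fun a _ => ?_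
    congr 1; funext s
    congr 2; ring
  · intro a _
    apply Fl_summable b d _ _ hd hdb
    · split_ifs <;> simp
    · have : 0 < n * b := Nat.mul_pos hn (by omega)
      omega

lemma F_zero_eq (b d n : ℕ) (hd : 0 < d) (hdb : d < b) (hn : 0 < n) :
    F b d 0 n = 1 / (n : ℝ) + ∑ a ∈ Finset.range b, if a = d then 0 else F b d 0 (n * b + a) := by
  have h0 : Fl b d 0 n 0 = 1 / (n : ℝ) := by simp [Fl, T, cnt]
  have hs : ∀ a, Summable fun l => if a = d then 0 else Fl b d 0 (n * b + a) l := by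
    intro a
    split_ifs
    · exact summable_zero
    · apply Fl_summable b d _ _ hd hdb (by simp)
      have : 0 < n * b := Nat.mul_pos hn (by omega)
      omega
  have h1 : ∀ a ∈ Finset.range b, (if a = d then 0 else F b d 0 (n * b + a))
      = ∑' l, if a = d then 0 else Fl b d 0 (n * b + a) l := by
    intro a _
    split_ifs
    · simp
    · rfl
  rw [Finset.sum_congr rfl h1, ← Summable.tsum_finsetSum (fun a _ => hs a)]
  unfold F
  rw [(Fl_summable b d 0 n hd hdb (by simp) hn).tsum_eq_zero_add, h0]
  congr 2; funext l
  unfold Fl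
  rw [T_zero_succ]
  refine Finset.sum_congr rfl fun a _ => ?_
  split_ifs
  · rfl
  congr 1; funext s
  congr 2; ring


lemma expand (b d k N : ℕ) (hd : 0 < d) (hdb : d < b) (hk : k ≤ 1) (hN : 2 ≤ N) :
    HasSum (fun j : ℕ => (-1 : ℝ) ^ j * momentU b d k (j + 1) / (N : ℝ) ^ (j + 2))
      (b / N - F b d k N) := by
  have hV := V_hasSum b d k hd hdb hk
  have hb : 0 < b := by omega
  have hN' : (2 : ℝ) ≤ N := by exact_mod_cast hN
  have hN0 : (0 : ℝ) < N := by linarith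
  let f : ℕ × ℕ → ℝ := fun p => (-1 : ℝ) ^ p.1 * A b d k (p.1 + 1) p.2 / (N : ℝ) ^ (p.1 + 2)
  have hf : Summable f := by
    have hg : Summable (fun p : ℕ × ℕ => (1 / 2 : ℝ) ^ p.1 * V b d k p.2) :=
      Summable.mul_of_nonneg (summable_geometric_of_lt_one (by norm_num) (by norm_num))
        hV.summable (fun j => by positivity) (fun l => V_nonneg b d k l)
    refine Summable.of_norm_bounded hg ?_
    rintro ⟨j, l⟩
    have hA := A_bounds b d k (j + 1) l hb
    simp only [f]
    rw [norm_div, norm_mul, norm_pow, norm_neg, norm_one, one_pow, one_mul,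
      Real.norm_of_nonneg hA.1, Real.norm_of_nonneg (by positivity : (0:ℝ) ≤ (N : ℝ) ^ (j + 2)),
      div_eq_mul_inv, mul_comm, one_div, inv_pow]
    have : (2 : ℝ) ^ j ≤ (N : ℝ) ^ (j + 2) :=
      calc (2 : ℝ) ^ j ≤ 2 ^ (j + 2) := pow_le_pow_right₀ (by norm_num) (by omega)
        _ ≤ (N : ℝ) ^ (j + 2) := by gcongr
    have h2 := hA.2
    have h1 := hA.1
    gcongr
  -- rows
  have hrow : ∀ j, HasSum (fun l => f (j, l))
      ((-1 : ℝ) ^ j * momentU b d k (j + 1) / (N : ℝ) ^ (j + 2)) := by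
    intro j
    rw [momentU_eq b d k (j + 1) hb]
    exact (((A_summable b d k (j + 1) hd hdb hk).hasSum.mul_left _).div_const _)
  have hcol : ∀ l, HasSum (fun j => f (j, l)) ((1 / N) * V b d k l - Fl b d k N l) := by
    intro l
    have hbl : (0 : ℝ) < (b : ℝ) ^ l := by positivity
    have e1 : (1 / N) * V b d k l - Fl b d k N l
        = T b d k l (fun s => ((1 / N) * ((b : ℝ) ^ l)⁻¹) * 1 - 1 / (((N * b ^ l + s : ℕ)) : ℝ)) := by
      rw [T_sub, T_smul, V, Fl, ← mul_assoc]
    have e2 : (fun j => f (j, l)) = fun j => T b d k l (fun s =>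
        ((-1 : ℝ) ^ j / (N : ℝ) ^ (j + 2) * ((b : ℝ) ^ l)⁻¹) * ((s : ℝ) / b ^ l) ^ (j + 1)) := by
      funext j
      rw [T_smul]
      simp only [f, A]
      ring
    rw [e1, e2]
    apply T_hasSum
    intro s hs
    have hs' : (s : ℝ) < b ^ l := by exact_mod_cast hs
    set x : ℝ := (s : ℝ) / b ^ l with hx
    have hx0 : 0 ≤ x := by positivity
    have hx1 : x < 1 := by rw [hx, div_lt_one hbl]; exact hs'
    have hgeo := hasSum_geometric_of_norm_lt_one (ξ := -(x / N)) (by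
      rw [norm_neg, Real.norm_of_nonneg (by positivity), div_lt_one hN0]; linarith)
    have := hgeo.mul_left (((b : ℝ) ^ l)⁻¹ * x / (N : ℝ) ^ 2)
    convert this using 1
    · rfl
    · funext j
      rw [neg_pow (x / N), div_pow x]
      clear_value x
      field_simp
      ring
    · have hsx : (s : ℝ) = x * b ^ l := by rw [hx]; field_simp
      push_cast
      rw [hsx]
      have h3 : (N : ℝ) + x ≠ 0 := by positivity
      have h4 : (1 : ℝ) - -(x / N) = (N + x) / N := by field_simp; ring
      have h5 : (N : ℝ) * b ^ l + x * b ^ l = (N + x) * b ^ l := by ring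
      rw [h4, h5]
      field_simp
      ring
  have hS := hf.hasSum
  have h1 := hS.prod_fiberwise hrow
  have hf' : Summable (f ∘ Prod.swap) := (Equiv.prodComm ℕ ℕ).summable_iff.2 hf
  have h2 := hf'.hasSum.prod_fiberwise hcol
  have h3 : ∑' p, (f ∘ Prod.swap) p = ∑' p, f p := (Equiv.prodComm ℕ ℕ).tsum_eq f
  have h4 := (hV.mul_left (1 / (N : ℝ))).sub (Fl_summable b d k N hd hdb hk (by omega)).hasSum
  have h5 := h4.unique h2
  rw [h3] at h5
  have h6 : (b : ℝ) / N - F b d k N = ∑' p, f p := by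
    rw [← h5, F]; ring
  rw [h6]; exact h1

lemma expand_diff (b d N : ℕ) (hd : 0 < d) (hdb : d < b) (hN : 2 ≤ N) :
    HasSum (fun j : ℕ => (-1 : ℝ) ^ j * (momentU b d 1 (j + 1) - momentU b d 0 (j + 1))
        * (1 / (N : ℝ) ^ (j + 2)))
      (F b d 0 N - F b d 1 N) := by
  have := (expand b d 1 N hd hdb le_rfl hN).sub (expand b d 0 N hd hdb (by simp) hN)
  convert this using 1
  · rfl
  · funext j; ring
  · ring

/-- block sums -/
noncomputable def D (b d l : ℕ) : ℝ := ∑ n ∈ Finset.Ico (b ^ l) (b ^ (l + 1)), F b d 1 n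

lemma D_succ (b d l : ℕ) (hd : 0 < d) (hdb : d < b) :
    D b d l = D b d (l + 1) + ∑ n ∈ Finset.Ico (b ^ l) (b ^ (l + 1)),
      (F b d 0 (b * n + d) - F b d 1 (b * n + d)) := by
  have hb : 0 < b := by omega
  unfold D
  have hbl := sum_blocks b (b ^ l) (b ^ (l + 1)) (Nat.pow_le_pow_right hb (by omega)) (F b d 1)
  rw [← pow_succ, ← pow_succ] at hbl
  rw [hbl, ← Finset.sum_add_distrib]
  refine Finset.sum_congr rfl fun n hn => ?_
  have hn0 : 0 < n := lt_of_lt_of_le (by positivity) (Finset.mem_Ico.1 hn).1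
  rw [F_one_eq b d n hd hdb hn0]
  have : ∀ a ∈ Finset.range b, F b d (if a = d then 0 else 1) (n * b + a) = F b d 1 (n * b + a)
      + if a = d then (F b d 0 (b * n + d) - F b d 1 (b * n + d)) else 0 := by
    intro a _
    split_ifs with h
    · rw [h, mul_comm b n]; ring
    · ring
  rw [Finset.sum_congr rfl this, Finset.sum_add_distrib, Finset.sum_ite_eq',
    if_pos (Finset.mem_range.2 hdb)]

lemma D_telescope (b d L : ℕ) (hd : 0 < d) (hdb : d < b) :
    ∑ n ∈ Finset.Ico 1 (b ^ L), (F b d 0 (b * n + d) - F b d 1 (b * n + d))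
      = D b d 0 - D b d L := by
  have hb : 0 < b := by omega
  induction L with
  | zero => simp
  | succ L ih =>
    rw [← Finset.sum_Ico_consecutive _ (Nat.one_le_pow L b hb)
      (Nat.pow_le_pow_right hb (Nat.le_succ L)), ih, D_succ b d L hd hdb]
    ring

lemma harm_block (p q : ℕ) (h : p ≤ q) :
    ∑ n ∈ Finset.Ico p q, (1 / ((n : ℝ) + 1)) = (harmonic q : ℝ) - harmonic p := by
  rw [Finset.sum_Ico_eq_sub _ h]
  simp [harmonic]

lemma tendsto_block (b : ℕ) (hb : 1 < b) :
    Tendsto (fun l : ℕ => ∑ n ∈ Finset.Ico (b ^ l) (b ^ (l + 1)), (1 / ((n : ℝ) + 1))) atTop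
      (nhds (Real.log b)) := by
  have h := Real.tendsto_harmonic_sub_log
  have hp : Tendsto (fun l : ℕ => b ^ l) atTop atTop := tendsto_pow_atTop_atTop_of_one_lt hb
  have h1 := h.comp hp
  have h2 := h1.comp (tendsto_add_atTop_nat 1)
  have h3 := (h2.sub h1).add_const (Real.log b)
  rw [sub_self, zero_add] at h3
  refine h3.congr fun l => ?_
  rw [harm_block _ _ (Nat.pow_le_pow_right (by omega) (Nat.le_succ l))]
  simp only [Function.comp]
  push_cast
  rw [Real.log_pow, Real.log_pow]
  push_cast; ring

lemma tendsto_block' (b : ℕ) (hb : 1 < b) :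
    Tendsto (fun l : ℕ => ∑ n ∈ Finset.Ico (b ^ l) (b ^ (l + 1)), (1 / (n : ℝ))) atTop
      (nhds (Real.log b)) := by
  have h1b : (1 : ℝ) < b := by exact_mod_cast hb
  have h0 : Tendsto (fun l : ℕ => ((b : ℝ)⁻¹) ^ l) atTop (nhds 0) :=
    tendsto_pow_atTop_nhds_zero_of_lt_one (by positivity) (inv_lt_one_of_one_lt₀ h1b)
  have h1 := h0.comp (tendsto_add_atTop_nat 1)
  have h2 := (tendsto_block b hb).add (h0.sub h1)
  rw [sub_zero, add_zero] at h2
  refine h2.congr fun l => ?_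
  have hle : b ^ l ≤ b ^ (l + 1) := Nat.pow_le_pow_right (by omega) (Nat.le_succ l)
  have := Finset.sum_Ico_sub (fun n : ℕ => 1 / (n : ℝ)) hle
  rw [Finset.sum_sub_distrib] at this
  push_cast at this
  simp only [Function.comp, inv_pow]
  simp only [one_div] at this ⊢
  linarith

lemma D_tendsto (b d : ℕ) (hd : 0 < d) (hdb : d < b) :
    Tendsto (D b d) atTop (nhds (b * Real.log b)) := by
  have hb : 1 < b := by omega
  have hpos : ∀ l n, n ∈ Finset.Ico (b ^ l) (b ^ (l + 1)) → 0 < n := fun l n hn =>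
    lt_of_lt_of_le (by positivity) (Finset.mem_Ico.1 hn).1
  refine tendsto_of_tendsto_of_tendsto_of_le_of_le ((tendsto_block b hb).const_mul (b : ℝ))
    ((tendsto_block' b hb).const_mul (b : ℝ)) ?_ ?_
  · intro l
    simp only [D]
    rw [Finset.mul_sum]
    exact Finset.sum_le_sum fun n hn => (F_bounds b d 1 n hd hdb le_rfl (hpos l n hn)).1
  · intro l
    simp only [D]
    rw [Finset.mul_sum]
    exact Finset.sum_le_sum fun n hn => (F_bounds b d 1 n hd hdb le_rfl (hpos l n hn)).2

lemma irwinSum_eq (b d : ℕ) (hd : 0 < d) (hdb : d < b) :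
    irwinSum b d 1 = D b d 0 + F b d 0 d - F b d 1 d := by
  have hb : 1 < b := by omega
  let g : ℕ → ℝ := fun m => if 0 < m ∧ (Nat.digits b m).count d = 1 then (1 : ℝ) / m else 0
  have hg0 : ∀ m, 0 ≤ g m := by
    intro m; simp only [g]; split_ifs
    · positivity
    · exact le_rfl
  have hblock : ∀ l, ∑ m ∈ Finset.Ico (b ^ l) (b ^ (l + 1)), g m
      = ∑ a ∈ Finset.Ico 1 b, Fl b d (if a = d then 0 else 1) a l := by
    intro l
    have := sum_blocks (b ^ l) 1 b hb.le g
    rw [one_mul, ← pow_succ'] at this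
    rw [this]
    refine Finset.sum_congr rfl fun a ha => ?_
    obtain ⟨ha1, ha2⟩ := Finset.mem_Ico.1 ha
    unfold Fl T
    refine Finset.sum_congr rfl fun t ht => ?_
    have ht := Finset.mem_range.1 ht
    have hlow : b ^ l ≤ a * b ^ l + t := by nlinarith [Nat.zero_le (b ^ l)]
    have hhigh : a * b ^ l + t < b ^ (l + 1) := by
      rw [pow_succ']
      calc a * b ^ l + t < (a + 1) * b ^ l := by linarith
        _ ≤ b * b ^ l := Nat.mul_le_mul_right _ ha2
    have hp : 0 < a * b ^ l + t := lt_of_lt_of_le (by positivity) hlow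
    simp only [g]
    rw [digits_cnt b d hb l _ hlow hhigh, cnt_high b d l a t ha2 ht]
    by_cases h : a = d
    · simp [h, h ▸ hp]
    · simp [h, hp]
  have hpart : ∀ L, ∑ m ∈ Finset.range (b ^ L), g m = ∑ l ∈ Finset.range L,
      ∑ a ∈ Finset.Ico 1 b, Fl b d (if a = d then 0 else 1) a l := by
    intro L
    induction L with
    | zero => simp [g]
    | succ L ih =>
      rw [Finset.sum_range_succ, ← ih, ← hblock, Finset.range_eq_Ico, Finset.range_eq_Ico,
        Finset.sum_Ico_consecutive _ (Nat.zero_le _)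
        (Nat.pow_le_pow_right (by omega) (Nat.le_succ L))]
  have hsum : HasSum (fun l => ∑ a ∈ Finset.Ico 1 b, Fl b d (if a = d then 0 else 1) a l)
      (∑ a ∈ Finset.Ico 1 b, F b d (if a = d then 0 else 1) a) := by
    refine hasSum_sum fun a ha => (Fl_summable b d _ a hd hdb ?_ ?_).hasSum
    · split_ifs <;> simp
    · have := (Finset.mem_Ico.1 ha).1
      omega
  have ht : Tendsto (fun L => ∑ m ∈ Finset.range (b ^ L), g m) atTop
      (nhds (∑ a ∈ Finset.Ico 1 b, F b d (if a = d then 0 else 1) a)) :=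
    hsum.tendsto_sum_nat.congr fun L => (hpart L).symm
  have hmono : Monotone (fun n => ∑ m ∈ Finset.range n, g m) := fun i j hij =>
    Finset.sum_le_sum_of_subset_of_nonneg (Finset.range_mono hij) fun m _ _ => hg0 m
  have hG : HasSum g (∑ a ∈ Finset.Ico 1 b, F b d (if a = d then 0 else 1) a) := by
    rw [hasSum_iff_tendsto_nat_of_nonneg hg0]
    exact (tendsto_iff_tendsto_subseq_of_monotone hmono
      (tendsto_pow_atTop_atTop_of_one_lt hb)).2 ht
  have : irwinSum b d 1 = ∑ a ∈ Finset.Ico 1 b, F b d (if a = d then 0 else 1) a := hG.tsum_eq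
  rw [this, D]
  have h2 : ∀ a ∈ Finset.Ico 1 b, F b d (if a = d then 0 else 1) a = F b d 1 a
      + if a = d then (F b d 0 d - F b d 1 d) else 0 := by
    intro a _
    split_ifs with h
    · rw [h]; ring
    · ring
  rw [Finset.sum_congr rfl h2, Finset.sum_add_distrib, Finset.sum_ite_eq',
    if_pos (Finset.mem_Ico.2 ⟨hd, hdb⟩)]
  simp; ring

end IrwinAux

open IrwinAux


/-- Exact convergent series for `I(b,d,1)`, `0 < d < b`
(series over `m ≥ 1` indexed by `m = j + 1`, series over `n ≥ 1` indexed by `n + 1`). -/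
theorem irwin_d_one_series (b d : ℕ) (hd : 0 < d) (hdb : d < b) :
    (∀ j : ℕ, Summable fun n : ℕ =>
      1 / ((b : ℝ) * (n + 1) + d) ^ (j + 2)) ∧
    Summable (fun j : ℕ =>
      (-1 : ℝ) ^ j * (momentU b d 1 (j + 1) - momentU b d 0 (j + 1)) *
        ((∑' n : ℕ, 1 / ((b : ℝ) * (n + 1) + d) ^ (j + 2))
          + ∑ a ∈ Finset.range b, if a ≠ d then 1 / ((b : ℝ) * d + a) ^ (j + 2) else 0)) ∧
    Summable (fun j : ℕ =>
      (-1 : ℝ) ^ j * momentU b d 0 (j + 1) / ((b : ℝ) * d + d) ^ (j + 2)) ∧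
    irwinSum b d 1 = (b : ℝ) * Real.log b +
      (∑' j : ℕ,
        (-1 : ℝ) ^ j * (momentU b d 1 (j + 1) - momentU b d 0 (j + 1)) *
          ((∑' n : ℕ, 1 / ((b : ℝ) * (n + 1) + d) ^ (j + 2))
            + ∑ a ∈ Finset.range b, if a ≠ d then 1 / ((b : ℝ) * d + a) ^ (j + 2) else 0)) +
      1 / ((b : ℝ) * d + d) +
      ∑' j : ℕ,
        (-1 : ℝ) ^ j * momentU b d 0 (j + 1) / ((b : ℝ) * d + d) ^ (j + 2) := by

  have hb : 1 < b := by omega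
  have hb' : (2 : ℝ) ≤ b := by exact_mod_cast hb
  have hNs : ∀ n : ℕ, (((b * (n + 1) + d : ℕ)) : ℝ) = (b : ℝ) * (n + 1) + d := by
    intro n; push_cast; ring
  have hN2 : ∀ n : ℕ, 2 ≤ b * (n + 1) + d := by intro n; nlinarith
  -- summability over `n`
  have hsq : Summable fun n : ℕ => 1 / ((n : ℝ) + 1) ^ 2 := by
    have := (summable_nat_add_iff 1).2 (Real.summable_one_div_nat_pow.2 (by norm_num : 1 < 2))
    simpa using this
  have hterm : ∀ j n : ℕ, 1 / ((b : ℝ) * (n + 1) + d) ^ (j + 2)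
      ≤ (1 / 2 : ℝ) ^ j * (1 / ((n : ℝ) + 1) ^ 2) := by
    intro j n
    have hn : (0 : ℝ) ≤ n := by positivity
    have hd0 : (0 : ℝ) ≤ d := by positivity
    rw [one_div_pow, one_div_mul_one_div, pow_add]
    gcongr
    · nlinarith
    · nlinarith
    · exact_mod_cast hd
  have hterm0 : ∀ j n : ℕ, 0 ≤ 1 / ((b : ℝ) * (n + 1) + d) ^ (j + 2) := by
    intro j n; positivity
  have C1 : ∀ j : ℕ, Summable fun n : ℕ => 1 / ((b : ℝ) * (n + 1) + d) ^ (j + 2) := fun j =>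
    Summable.of_nonneg_of_le (hterm0 j) (hterm j) (hsq.mul_left _)
  -- double series
  let f : ℕ × ℕ → ℝ := fun p => (-1 : ℝ) ^ p.1 *
    (momentU b d 1 (p.1 + 1) - momentU b d 0 (p.1 + 1)) *
      (1 / ((b : ℝ) * (p.2 + 1) + d) ^ (p.1 + 2))
  have hf : Summable f := by
    have hg : Summable (fun p : ℕ × ℕ => (b : ℝ) * ((1 / 2 : ℝ) ^ p.1 * (1 / ((p.2 : ℝ) + 1) ^ 2))) :=
      (Summable.mul_of_nonneg (summable_geometric_of_lt_one (by norm_num) (by norm_num))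
        hsq (fun j => by positivity) (fun l => by positivity)).mul_left _
    refine Summable.of_norm_bounded hg ?_
    rintro ⟨j, n⟩
    simp only [f]
    rw [norm_mul, norm_mul, norm_pow, norm_neg, norm_one, one_pow, one_mul,
      Real.norm_of_nonneg (hterm0 j n)]
    have h1 := momentU_bounds b d 1 (j + 1) hd hdb le_rfl
    have h0 := momentU_bounds b d 0 (j + 1) hd hdb (by simp)
    refine mul_le_mul ?_ (hterm j n) (hterm0 j n) (by positivity)
    rw [Real.norm_eq_abs, abs_le]
    constructor <;> linarith
  have hrow : ∀ j, HasSum (fun n => f (j, n)) ((-1 : ℝ) ^ j *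
      (momentU b d 1 (j + 1) - momentU b d 0 (j + 1)) *
        ∑' n : ℕ, 1 / ((b : ℝ) * (n + 1) + d) ^ (j + 2)) := fun j => (C1 j).hasSum.mul_left _
  have hcol : ∀ n : ℕ, HasSum (fun j => f (j, n))
      (F b d 0 (b * (n + 1) + d) - F b d 1 (b * (n + 1) + d)) := by
    intro n
    have := expand_diff b d (b * (n + 1) + d) hd hdb (hN2 n)
    rw [hNs] at this
    exact this
  have h1 := hf.hasSum.prod_fiberwise hrow
  have hf' : Summable (f ∘ Prod.swap) := (Equiv.prodComm ℕ ℕ).summable_iff.2 hf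
  have h2 := hf'.hasSum.prod_fiberwise hcol
  have h3 : ∑' p, (f ∘ Prod.swap) p = ∑' p, f p := (Equiv.prodComm ℕ ℕ).tsum_eq f
  rw [h3] at h2
  have h4 : ∑' p, f p = D b d 0 - b * Real.log b := by
    have hl := h2.tendsto_sum_nat
    have hsub : Tendsto (fun L : ℕ => b ^ L - 1) atTop atTop :=
      (tendsto_sub_atTop_nat 1).comp (tendsto_pow_atTop_atTop_of_one_lt hb)
    have hl2 := hl.comp hsub
    refine tendsto_nhds_unique hl2 ?_
    refine ((D_tendsto b d hd hdb).const_sub (D b d 0)).congr fun L => ?_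
    rw [← D_telescope b d L hd hdb, Finset.sum_Ico_eq_sum_range]
    simp only [Function.comp]
    refine Finset.sum_congr rfl fun n _ => ?_
    rw [add_comm 1 n]
  rw [h4] at h1
  -- the finite sum
  have h5 : HasSum (fun j : ℕ => (-1 : ℝ) ^ j *
      (momentU b d 1 (j + 1) - momentU b d 0 (j + 1)) *
        ∑ a ∈ Finset.range b, if a ≠ d then 1 / ((b : ℝ) * d + a) ^ (j + 2) else 0)
      (∑ a ∈ Finset.range b, if a ≠ d then (F b d 0 (b * d + a) - F b d 1 (b * d + a)) else 0) := by
    simp_rw [Finset.mul_sum]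
    refine hasSum_sum fun a _ => ?_
    by_cases h : a = d
    · simp [h]
    · simp only [ne_eq, h, not_false_eq_true, if_true]
      have := expand_diff b d (b * d + a) hd hdb (by nlinarith)
      push_cast at this
      exact this
  have h6 := h1.add h5
  simp_rw [← mul_add] at h6
  have h7 := expand b d 0 (b * d + d) hd hdb (by simp) (by nlinarith)
  push_cast at h7
  refine ⟨C1, h6.summable, h7.summable, ?_⟩
  rw [h6.tsum_eq, h7.tsum_eq, irwinSum_eq b d hd hdb]
  have e0 := F_zero_eq b d d hd hdb hd
  have e1 := F_one_eq b d d hd hdb hd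
  have e2 : ∑ a ∈ Finset.range b, F b d (if a = d then 0 else 1) (d * b + a)
      = F b d 0 (b * d + d) + ∑ a ∈ Finset.range b, if a = d then 0 else F b d 1 (d * b + a) := by
    have : ∀ a ∈ Finset.range b, F b d (if a = d then 0 else 1) (d * b + a)
        = (if a = d then F b d 0 (b * d + d) else 0)
          + if a = d then 0 else F b d 1 (d * b + a) := by
      intro a _
      split_ifs with h
      · rw [h, mul_comm b d, add_zero]
      · rw [zero_add]
    rw [Finset.sum_congr rfl this, Finset.sum_add_distrib, Finset.sum_ite_eq',
      if_pos (Finset.mem_range.2 hdb)]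
  have e3 : (∑ a ∈ Finset.range b, if a ≠ d then (F b d 0 (b * d + a) - F b d 1 (b * d + a)) else 0)
      = (∑ a ∈ Finset.range b, if a = d then 0 else F b d 0 (d * b + a))
        - ∑ a ∈ Finset.range b, if a = d then 0 else F b d 1 (d * b + a) := by
    rw [← Finset.sum_sub_distrib]
    refine Finset.sum_congr rfl fun a _ => ?_
    rw [mul_comm b d]
    by_cases h : a = d <;> simp [h]
  rw [e3, e0, e1, e2]
  have hd' : (0 : ℝ) < d := by exact_mod_cast hd
  have e4 : 1 / ((b : ℝ) * d + d) + b / ((b : ℝ) * d + d) = 1 / d := by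
    field_simp
    ring
  linarith
end
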